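/- Suppose γ > 0 and β > 0. Then for every integer n and every Floquet exponent ξ ∈ (0, 1/2], there exists k > 0 such that ω(n+ξ) = ω(n+1+ξ), where c₀ = γ/k² + βk² and ω(x) = k²·x·(c₀ − βk²x²) − γ/x. -/

import Mathlib

/-- Dispersion function of the linearized Ostrovsky equation,
with `c₀ = γ/k² + βk²` built in. -/
noncomputable def omega (γ β k x : ℝ) : ℝ :=
  k^2 * x * ((γ/k^2 + β*k^2) - β*k^2*x^2) - γ/x

/-! Inserting `c₀` turns the dispersion function into `γ (x - 1/x) + β k⁴ (x - x³)`, so the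
collision of two distinct modes is a linear equation in `k⁴`. For the modes `x` and `x + 1` it reads
`3 β (x (x + 1))² k⁴ = γ (x (x + 1) + 1)`; as `x (x + 1) + 1 > 0`, the solution `k⁴` is positive
when `γ` and `β` have the same sign. -/

theorem omega_sub_omega (γ β : ℝ) {k x y : ℝ} (hk : k ≠ 0) (hx : x ≠ 0) (hy : y ≠ 0) :
    omega γ β k x - omega γ β k y =
      (x - y) / (x * y) *
        (γ * (x * y + 1) - β * (x * y) * (x ^ 2 + x * y + y ^ 2 - 1) * k ^ 4) := by
  unfold omega
  field_simp
  ring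

theorem omega_eq_omega_iff {γ β k x y : ℝ} (hk : k ≠ 0) (hx : x ≠ 0) (hy : y ≠ 0) :
    omega γ β k x = omega γ β k y ↔
      x = y ∨ β * (x * y) * (x ^ 2 + x * y + y ^ 2 - 1) * k ^ 4 = γ * (x * y + 1) := by
  rw [← sub_eq_zero, omega_sub_omega γ β hk hx hy, mul_eq_zero,
    div_eq_zero_iff, or_iff_left (mul_ne_zero hx hy), sub_eq_zero, sub_eq_zero,
    eq_comm (a := γ * (x * y + 1))]

theorem exists_pos_mul_pow_eq {a b : ℝ} (hab : 0 < a * b) {n : ℕ} (hn : n ≠ 0) :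
    ∃ k : ℝ, 0 < k ∧ a * k ^ n = b := by
  have ha : a ≠ 0 := left_ne_zero_of_mul hab.ne'
  have hdiv : 0 < b / a := by
    rw [← mul_div_mul_left b a ha]
    exact div_pos hab (mul_self_pos.2 ha)
  refine ⟨(b / a) ^ (n⁻¹ : ℝ), Real.rpow_pos_of_pos hdiv _, ?_⟩
  rw [Real.rpow_inv_natCast_pow hdiv.le hn, mul_div_cancel₀ b ha]

theorem exists_pos_omega_eq_omega {γ β x y : ℝ}
    (h : 0 < β * (x * y) * (x ^ 2 + x * y + y ^ 2 - 1) * (γ * (x * y + 1))) :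
    ∃ k : ℝ, 0 < k ∧ omega γ β k x = omega γ β k y := by
  have hx : x ≠ 0 := by
    rintro rfl
    simp at h
  have hy : y ≠ 0 := by
    rintro rfl
    simp at h
  obtain ⟨k, hk, hcollision⟩ := exists_pos_mul_pow_eq h four_ne_zero
  exact ⟨k, hk, (omega_eq_omega_iff hk.ne' hx hy).2 (.inr hcollision)⟩

theorem intCast_add_ne_zero {R : Type*} [Ring R] [LinearOrder R] [IsStrictOrderedRing R]
    (n : ℤ) {ξ : R} (hξ₀ : 0 < ξ) (hξ₁ : ξ < 1) : (n : R) + ξ ≠ 0 := by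
  intro h
  obtain rfl : ξ = ((-n : ℤ) : R) := by rw [Int.cast_neg, eq_neg_of_add_eq_zero_right h]
  norm_cast at hξ₀ hξ₁
  lia

theorem adjacent_collision_pos_beta_general {γ β x : ℝ} (hγβ : 0 < γ * β) (hx : x ≠ 0)
    (hx' : x + 1 ≠ 0) :
    ∃ k : ℝ, 0 < k ∧ omega γ β k x = omega γ β k (x + 1) := by
  have hpos : 0 < x * (x + 1) + 1 := by linarith [sq_nonneg (2 * x + 1)]
  refine exists_pos_omega_eq_omega ?_
  calc
    0 < 3 * (γ * β) * (x * (x + 1)) ^ 2 * (x * (x + 1) + 1) := by positivity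
    _ = β * (x * (x + 1)) * (x ^ 2 + x * (x + 1) + (x + 1) ^ 2 - 1) *
          (γ * (x * (x + 1) + 1)) := by ring

theorem adjacent_collision_pos_beta (γ β : ℝ) (hγ : 0 < γ) (hβ : 0 < β) :
    ∀ (n : ℤ) (ξ : ℝ), 0 < ξ → ξ ≤ 1/2 →
      ∃ k : ℝ, 0 < k ∧
        omega γ β k ((n : ℝ) + ξ) = omega γ β k ((n : ℝ) + 1 + ξ) := by
  intro n ξ hξ₀ hξ
  have hξ₁ : ξ < 1 := hξ.trans_lt one_half_lt_one
  have hne : (n : ℝ) + 1 + ξ ≠ 0 := mod_cast intCast_add_ne_zero (n + 1) hξ₀ hξ₁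
  rw [add_right_comm] at hne ⊢
  exact adjacent_collision_pos_beta_general (mul_pos hγ hβ) (intCast_add_ne_zero n hξ₀ hξ₁) hne
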